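/- arXiv:1605.00978 — 2 statements merged into one kernel-verified Lean document; each statement's English description precedes it below -/
import Mathlib

section
/- Let 𝒟 = (D_0,…,D_m) be a D-flag of length m with gaps g_1 < … < g_m, let 𝓜_top be a standard module with D_{𝓜_top} = D_m satisfying dim_ℂ(𝓜̄^{(g_i)}/𝓜̄^{(g_i+1)}) = 1 for all 1 ≤ i ≤ m (where 𝓜̄ = 𝓜_top/𝔪𝓜_top and 𝓜̄^{(j)} is the image of 𝓜_top ∩ z^j𝒪 in 𝓜̄), let 𝓜̄_0 ⊆ 𝓜̄ be a ℂ-subspace with dim_ℂ(𝓜̄/𝓜̄_0) = m, dim_ℂ((𝓜̄_0 + 𝓜̄^{(g_i)})/(𝓜̄_0 + 𝓜̄^{(g_i+1)})) = 1 for all i, and 𝓜̄_0 ⊄ 𝓜̄^{(1)}, and let 𝓜_0 be the unique ℛ-submodule with 𝔪𝓜_top ⊆ 𝓜_0 ⊆ 𝓜_top whose image in 𝓜̄ is 𝓜̄_0. Then the set of flags of standard modules 𝓜_0 ⊆ 𝓜_1 ⊆ … ⊆ 𝓜_m = 𝓜_top (with the given 𝓜_0 and 𝓜_m) satisfying D_{𝓜_i}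 = D_i for all i is in bijection with the group of m×m upper-triangular complex matrices with all diagonal entries equal to 1; in particular it is in bijection with ℂ^{m(m−1)/2}. -/
open PowerSeries

noncomputable section

/-- `𝒪 = ℂ⟦z⟧`, the ring of formal power series over `ℂ`. -/
abbrev 𝒪 : Type := PowerSeries ℂ

/-- `ν(f)`: the order of a power series (least `n` with nonzero coefficient);
only meaningful for `f ≠ 0`. -/
noncomputable def ord (f : 𝒪) : ℕ := sInf {n : ℕ | PowerSeries.coeff n f ≠ 0}

/-- The value semigroup `Γ = {ν(x) : 0 ≠ x ∈ ℛ}` of a subalgebra `ℛ ⊆ 𝒪`. -/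
def SGamma (R : Subalgebra ℂ 𝒪) : Set ℕ := {n | ∃ x ∈ R, x ≠ (0:𝒪) ∧ ord x = n}

/-- The set of gaps `G = ℕ ∖ Γ`. -/
def Gaps (R : Subalgebra ℂ 𝒪) : Set ℕ := (SGamma R)ᶜ

/-- `Δ` is a `Γ`-module: `Γ + Δ ⊆ Δ`. -/
def IsGammaModule (Γ Δ : Set ℕ) : Prop := ∀ a ∈ Γ, ∀ d ∈ Δ, a + d ∈ Δ

/-- `Δ_𝓜 = {ν(x) : 0 ≠ x ∈ 𝓜}` for an `ℛ`-submodule `𝓜 ⊆ 𝒪`. -/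
def DeltaM (R : Subalgebra ℂ 𝒪) (M : Submodule ↥R 𝒪) : Set ℕ :=
  {n | ∃ x ∈ M, x ≠ (0:𝒪) ∧ ord x = n}

/-- `D_𝓜 = Δ_𝓜 ∩ G`, the set of added gaps. -/
def Dset (R : Subalgebra ℂ 𝒪) (M : Submodule ↥R 𝒪) : Set ℕ := DeltaM R M ∩ Gaps R

/-- A standard module: a finitely generated `ℛ`-submodule of `𝒪` containing an
element of order `0`. -/
def IsStd (R : Subalgebra ℂ 𝒪) (M : Submodule ↥R 𝒪) : Prop :=
  M.FG ∧ ∃ x ∈ M, x ≠ (0:𝒪) ∧ ord x = 0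

/-- `c ≥ 1` is the conductor of `ℛ`: the minimal exponent with `z^c𝒪 ⊆ ℛ`. -/
def HasConductor (R : Subalgebra ℂ 𝒪) (c : ℕ) : Prop :=
  1 ≤ c ∧ (∀ f : 𝒪, (PowerSeries.X : 𝒪)^c * f ∈ R) ∧
    ∀ c' : ℕ, (∀ f : 𝒪, (PowerSeries.X : 𝒪)^c' * f ∈ R) → c ≤ c'

/-- `z^j𝒪` as a `ℂ`-submodule of `𝒪`. -/
def zO (j : ℕ) : Submodule ℂ 𝒪 :=
  LinearMap.range (LinearMap.mulLeft ℂ ((PowerSeries.X : 𝒪)^j))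

/-- `𝔪𝓜` as a `ℂ`-submodule of `𝒪`, where `𝔪 = {x ∈ ℛ : x = 0 or ν(x) > 0}`
is the maximal ideal of `ℛ`. -/
def mSmul (R : Subalgebra ℂ 𝒪) (M : Submodule ↥R 𝒪) : Submodule ℂ 𝒪 :=
  Submodule.span ℂ {z : 𝒪 | ∃ r ∈ (R : Set 𝒪), ∃ y ∈ M, (r = 0 ∨ 0 < ord r) ∧ z = r * y}

/-- `dim_ℂ (A / B)` for `ℂ`-subspaces; intended for `B ≤ A`. -/
noncomputable def quotDim (A B : Submodule ℂ 𝒪) : ℕ :=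
  Module.finrank ℂ (↥A ⧸ Submodule.comap A.subtype B)

/-- `D_i = D_0 ∪ {g_1, …, g_i}` (the gaps `g` are indexed by `1, …, m`). -/
def DFlagSet (D0 : Set ℕ) (g : ℕ → ℕ) (i : ℕ) : Set ℕ := D0 ∪ g '' Set.Icc 1 i

/-- `(D_0, …, D_m)` with `D_i = D_0 ∪ {g_1 < … < g_i}` is a `D`-flag:
all `Δ_i = Γ ∪ D_i` are `Γ`-modules. -/
def IsDFlag (R : Subalgebra ℂ 𝒪) (m : ℕ) (D0 : Set ℕ) (g : ℕ → ℕ) : Prop :=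
  D0 ⊆ Gaps R ∧ StrictMonoOn g (Set.Icc 1 m) ∧
  (∀ i, 1 ≤ i → i ≤ m → g i ∈ Gaps R \ D0) ∧
  (∀ i ≤ m, IsGammaModule (SGamma R) (SGamma R ∪ DFlagSet D0 g i))

/-- A `D`-flag is admissible if it is realized by a flag of standard modules. -/
def IsAdmissibleFlag (R : Subalgebra ℂ 𝒪) (m : ℕ) (D0 : Set ℕ) (g : ℕ → ℕ) : Prop :=
  ∃ MM : ℕ → Submodule ↥R 𝒪, (∀ i, i < m → MM i ≤ MM (i+1)) ∧
    ∀ i ≤ m, IsStd R (MM i) ∧ Dset R (MM i) = DFlagSet D0 g i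

/-- The subalgebra `ℂ[z^a, z^b + z^c] + z^N ℂ⟦z⟧` of `𝒪`. -/
def Rring (a b c N : ℕ) : Subalgebra ℂ 𝒪 where
  carrier := {f : 𝒪 | ∃ p ∈ Algebra.adjoin ℂ
      ({(PowerSeries.X : 𝒪)^a, (PowerSeries.X : 𝒪)^b + (PowerSeries.X : 𝒪)^c} : Set 𝒪),
    ∃ g : 𝒪, f = p + (PowerSeries.X : 𝒪)^N * g}
  mul_mem' := by
    rintro x y ⟨p, hp, gx, rfl⟩ ⟨q, hq, gy, rfl⟩
    exact ⟨p * q, mul_mem hp hq,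
      p * gy + gx * q + (PowerSeries.X : 𝒪)^N * (gx * gy), by ring⟩
  one_mem' := ⟨1, one_mem _, 0, by ring⟩
  add_mem' := by
    rintro x y ⟨p, hp, gx, rfl⟩ ⟨q, hq, gy, rfl⟩
    exact ⟨p + q, add_mem hp hq, gx + gy, by ring⟩
  zero_mem' := ⟨0, zero_mem _, 0, by ring⟩
  algebraMap_mem' := fun r => ⟨algebraMap ℂ 𝒪 r, Subalgebra.algebraMap_mem _ r, 0, by ring⟩

/-- The ring `ℂ⟦z^4, z^{2u}+z^v⟧ = ℂ[z^4, z^{2u}+z^v] + z^{4u+v}ℂ⟦z⟧` for the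
plane curve singularity with Puiseux exponents `(4, 2u, v)`. -/
def Rcal (u v : ℕ) : Subalgebra ℂ 𝒪 := Rring 4 (2*u) v (4*u+v)

/-- The gap counting function `γ_Δ(ℓ) = |[ℓ,∞) ∖ Δ|`. -/
noncomputable def gapCount (Δ : Set ℕ) (ℓ : ℕ) : ℕ := Set.ncard {k : ℕ | ℓ ≤ k ∧ k ∉ Δ}

/-- `n = n(D)`: the smallest odd number in `(Δ ∪ {v}) ∩ [2u, ∞)`. -/
noncomputable def nOdd (u v : ℕ) (Δ : Set ℕ) : ℕ :=
  sInf {k : ℕ | Odd k ∧ 2*u ≤ k ∧ (k ∈ Δ ∨ k = v)}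

/-- The dimension change `μ_{D,g}` of Theorem `dimprop` (for the family `(4,2u,v)`),
where `Γ` is the value semigroup. -/
noncomputable def muDim (u v : ℕ) (Γ : Set ℕ) (D : Set ℕ) (gp : ℕ) : ℕ :=
  let Δ : Set ℕ := Γ ∪ D
  let Δ' : Set ℕ := Δ ∪ {gp}
  let n : ℕ := nOdd u v Δ
  if gp % 4 = 2 then
    (gapCount Δ' gp - gapCount Δ' (gp+4)) - (gapCount Δ' (gp+n) - gapCount Δ' (gp+4+n))
  else gapCount Δ' gp - gapCount Δ' (gp+4)


/-- Flags of standard modules `𝓜_0 ⊆ 𝓜_1 ⊆ … ⊆ 𝓜_m = 𝓜_top` realizing the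
`D`-flag `(D_0,…,D_m)`, with prescribed ends `𝓜_0` and `𝓜_m = 𝓜_top`. -/
def FlagsBetween (R : Subalgebra ℂ 𝒪) (m : ℕ) (D0 : Set ℕ) (g : ℕ → ℕ)
    (M0 Mtop : Submodule ↥R 𝒪) : Type :=
  {MM : Fin (m+1) → Submodule ↥R 𝒪 //
    (∀ i : Fin m, MM i.castSucc ≤ MM i.succ) ∧ MM 0 = M0 ∧ MM (Fin.last m) = Mtop ∧
    ∀ i : Fin (m+1), IsStd R (MM i) ∧ Dset R (MM i) = DFlagSet D0 g (i : ℕ)}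

/-!
The space `𝓜₀` has a complement in `𝓜_top` with a basis `e₁, …, e_m` of orders `ν(e_i) = g_i`. No
`g_i` is the order of an element of `𝓜₀`, so for `v ∈ 𝓜₀` the order of `v + ∑ a_i e_i` is
`min(ν(v), g_k)`, where `k` is the position of the first nonzero coordinate of `a`. Every subspace
`W` between `𝓜₀` and `𝓜_top` contains `𝔪𝓜_top` and is therefore a module; it is standard, since
`𝓜₀` contains a unit and hence `z ^ c 𝒪`. Such `W` correspond to subspaces `U ⊆ ℂᵐ`, and
`D_W = D₀ ∪ {g_k | k is a leading index of U}`. Hence the flags in question become the complete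
flags of `ℂᵐ` opposite to the coordinate flag. They form the big Bruhat cell, which is parametrized
by the unitriangular matrices.
-/

section LeadingIndex

variable {K ι κ : Type*} [Field K] [LinearOrder ι]

/-- `k` is the leading index of the vector `a`: the position of its first nonzero entry. This is
`Matrix.IsLeadingEntry` for a single row. -/
def IsLeadingIndex (a : ι → K) (k : ι) : Prop := (∀ l < k, a l = 0) ∧ a k ≠ 0

lemma exists_isLeadingIndex [WellFoundedLT ι] {a : ι → K} (ha : a ≠ 0) :
    ∃ k, IsLeadingIndex a k :=
  Matrix.row_ne_zero_iff_exists_isLeadingEntry (A := Matrix.replicateRow Unit a) (i := ()) |>.1 ha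

lemma IsLeadingIndex.unique {a : ι → K} {k l : ι} (hk : IsLeadingIndex a k)
    (hl : IsLeadingIndex a l) : k = l :=
  Matrix.IsLeadingEntry.unique (A := Matrix.replicateRow Unit a) (i := ()) hk hl

lemma IsLeadingIndex.linearCombination [Fintype κ] [LinearOrder κ] {b : κ → ι → K} {γ : κ → ι}
    (hγ : StrictMono γ) (hb : ∀ k, IsLeadingIndex (b k) (γ k)) {a : κ → K} {k : κ}
    (ha : IsLeadingIndex a k) : IsLeadingIndex (Fintype.linearCombination K b a) (γ k) := by
  simp only [IsLeadingIndex, Fintype.linearCombination_apply, Finset.sum_apply, Pi.smul_apply,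
    smul_eq_mul]
  refine ⟨fun j hj => Finset.sum_eq_zero fun l _ => ?_, ?_⟩
  · rcases lt_or_ge l k with hlk | hkl
    · rw [ha.1 l hlk, zero_mul]
    · rw [(hb l).1 j (hj.trans_le (hγ.monotone hkl)), mul_zero]
  · rw [Finset.sum_eq_single k _ (by simp)]
    · exact mul_ne_zero ha.2 (hb k).2
    · intro l _ hlk
      rcases hlk.lt_or_gt with hlk | hkl
      · rw [ha.1 l hlk, zero_mul]
      · rw [(hb l).1 _ (hγ hkl), mul_zero]

/-- The set of leading indices of the vectors of a subspace (the pivot columns of any echelon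
basis). -/
def leadingIndices (U : Submodule K (ι → K)) : Set ι := {k | ∃ a ∈ U, IsLeadingIndex a k}

lemma leadingIndices_eq_empty_iff [WellFoundedLT ι] {U : Submodule K (ι → K)} :
    leadingIndices U = ∅ ↔ U = ⊥ := by
  refine ⟨fun hU => (Submodule.eq_bot_iff U).2 fun a ha => ?_, ?_⟩
  · by_contra ha0
    obtain ⟨k, hk⟩ := exists_isLeadingIndex ha0
    exact hU.subset ⟨a, ha, hk⟩
  · rintro rfl
    refine Set.eq_empty_of_forall_notMem ?_
    rintro k ⟨a, rfl, hk⟩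
    exact hk.2 rfl

variable [Finite ι]

lemma eq_of_le_of_leadingIndices_subset {U W : Submodule K (ι → K)} (hUW : U ≤ W)
    (h : leadingIndices W ⊆ leadingIndices U) : U = W := by
  refine hUW.antisymm fun w hw => ?_
  by_contra hwU
  let bad : Set ι := {k | ∃ w ∈ W, w ∉ U ∧ IsLeadingIndex w k}
  have leads_bad : ∀ w ∈ W, w ∉ U → ∃ k ∈ bad, IsLeadingIndex w k := by
    intro w hw hwU
    obtain ⟨k, hk⟩ := exists_isLeadingIndex (show w ≠ 0 from fun h0 => hwU (h0 ▸ U.zero_mem))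
    exact ⟨k, ⟨w, hw, hwU, hk⟩, hk⟩
  obtain ⟨k₀, hk₀, -⟩ := leads_bad w hw hwU
  obtain ⟨k, ⟨w, hw, hwU, hwk⟩, hmax⟩ := wellFounded_gt.has_min bad ⟨k₀, hk₀⟩
  obtain ⟨u, hu, huk⟩ := h ⟨w, hw, hwk⟩
  -- Cancelling the leading entry of `w` against `u ∈ U` pushes the leading index past `k`.
  obtain ⟨l, hl, hlead⟩ := leads_bad (w - (w k / u k) • u)
    (W.sub_mem hw (W.smul_mem _ (hUW hu)))
    (fun hmem => hwU ((U.sub_mem_iff_left (U.smul_mem _ hu)).1 hmem))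
  refine hmax l hl (lt_of_not_ge fun hlk => hlead.2 ?_)
  rcases hlk.lt_or_eq with hlk | rfl
  · simp [hwk.1 l hlk, huk.1 l hlk]
  · simp [huk.2]

lemma leadingIndices_span_image {b : ι → ι → K} (hb : ∀ k, IsLeadingIndex (b k) k) (s : Set ι) :
    leadingIndices (Submodule.span K (b '' s)) = s := by
  have := Fintype.ofFinite ι
  refine Set.Subset.antisymm ?_ fun k hk =>
    ⟨b k, Submodule.subset_span (Set.mem_image_of_mem b hk), hb k⟩
  rintro k ⟨w, hw, hwk⟩
  obtain ⟨a, ha, rfl⟩ := (Finsupp.mem_span_image_iff_linearCombination K).1 hw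
  have hsum : Finsupp.linearCombination K b a = Fintype.linearCombination K b a := by
    simp [Finsupp.linearCombination_apply, Finsupp.sum_fintype, Fintype.linearCombination_apply]
  rw [hsum] at hwk
  obtain ⟨l, hl⟩ := exists_isLeadingIndex (show ⇑a ≠ 0 by
    intro h0
    rw [h0, map_zero] at hwk
    exact hwk.2 rfl)
  obtain rfl := hwk.unique (IsLeadingIndex.linearCombination strictMono_id hb hl)
  exact ha (Finsupp.mem_support_iff.2 hl.2)

end LeadingIndex

section Unitriangular

variable {K : Type*} [Field K] {n : Type*} [LinearOrder n] {m : ℕ}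

variable (K n) in
/-- Upper-triangular matrices with all diagonal entries equal to `1`. -/
abbrev UnitriangularMatrix : Type _ :=
  {A : Matrix n n K // (∀ i j : n, j < i → A i j = 0) ∧ ∀ i : n, A i i = 1}

lemma UnitriangularMatrix.isLeadingIndex_row (A : UnitriangularMatrix K n) (i : n) :
    IsLeadingIndex (A.1 i) i :=
  ⟨A.2.1 i, by simp [A.2.2]⟩

variable (K n) in
/-- A unitriangular matrix is given freely by its entries above the diagonal. -/
def unitriangularMatrixEquivPi : UnitriangularMatrix K n ≃ ({p : n × n // p.1 < p.2} → K) where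
  toFun A p := A.1 p.1.1 p.1.2
  invFun f :=
    ⟨fun i j => if h : i < j then f ⟨(i, j), h⟩ else if i = j then 1 else 0,
      fun i j hji => by simp [hji.not_gt, hji.ne'], fun i => by simp⟩
  left_inv A := by
    ext i j
    rcases lt_trichotomy i j with hij | rfl | hji
    · simp [hij]
    · simp [A.2.2]
    · simp [hji.not_gt, hji.ne', A.2.1 i j hji]
  right_inv f := by
    ext ⟨p, hp⟩
    simp [hp]

lemma card_pairs_lt (m : ℕ) :
    Fintype.card {p : Fin m × Fin m // p.1 < p.2} = m * (m - 1) / 2 := by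
  let e : {p : Fin m × Fin m // p.1 < p.2} ≃ Σ j : Fin m, Fin j :=
    { toFun p := ⟨p.1.2, p.1.1, p.2⟩
      invFun q := ⟨(⟨q.2, q.2.2.trans q.1.2⟩, q.1), q.2.2⟩
      left_inv _ := rfl
      right_inv _ := rfl }
  rw [Fintype.card_congr e, Fintype.card_sigma]
  simp only [Fintype.card_fin]
  rw [Fin.sum_univ_eq_sum_range (fun j => j), Finset.sum_range_id]

variable (K m) in
/-- Complete flags of `K ^ m` that are opposite to the flag of the coordinate subspaces
`{a | a l = 0 for all l < i}`. That `U i` is a complement of the `i`-th coordinate subspace is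
expressed by its leading indices being exactly those below `i`. -/
@[ext]
structure OppositeFlag where
  space : Fin (m + 1) → Submodule K (Fin m → K)
  monotone : Monotone space
  leadingIndices_eq : ∀ i, leadingIndices (space i) = {k : Fin m | (k : ℕ) < i}

namespace OppositeFlag

lemma zero_eq_bot (U : OppositeFlag K m) : U.space 0 = ⊥ :=
  leadingIndices_eq_empty_iff.1 (by simp [U.leadingIndices_eq])

lemma last_eq_top (U : OppositeFlag K m) : U.space (Fin.last m) = ⊤ :=
  eq_of_le_of_leadingIndices_subset le_top (by simp [U.leadingIndices_eq])

/-- The flag whose `i`-th member is spanned by the first `i` rows of `A`. -/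
def ofRows (A : UnitriangularMatrix K (Fin m)) : OppositeFlag K m where
  space i := Submodule.span K (A.1 '' {k | (k : ℕ) < i})
  monotone _ _ hij := Submodule.span_mono
    (Set.image_mono fun _ hk => lt_of_lt_of_le hk (Fin.le_def.1 hij))
  leadingIndices_eq _ := leadingIndices_span_image A.isLeadingIndex_row _

lemma row_mem_ofRows (A : UnitriangularMatrix K (Fin m)) (i : Fin m) :
    A.1 i ∈ (ofRows A).space i.succ :=
  Submodule.subset_span ⟨i, by simp, rfl⟩

lemma exists_rows_mem (U : OppositeFlag K m) :
    ∃ A : UnitriangularMatrix K (Fin m), ∀ i, A.1 i ∈ U.space i.succ := by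
  have exists_row : ∀ i : Fin m, ∃ w ∈ U.space i.succ, (∀ l < i, w l = 0) ∧ w i = 1 := by
    intro i
    obtain ⟨w, hw, hlt, hwi⟩ : i ∈ leadingIndices (U.space i.succ) := by simp [U.leadingIndices_eq]
    exact ⟨(w i)⁻¹ • w, Submodule.smul_mem _ _ hw, fun l hl => by simp [hlt l hl], by simp [hwi]⟩
  choose A hAU hA0 hA1 using exists_row
  exact ⟨⟨A, hA0, hA1⟩, hAU⟩

lemma rows_eq_of_mem {U : OppositeFlag K m} {A B : UnitriangularMatrix K (Fin m)}
    (hA : ∀ i, A.1 i ∈ U.space i.succ) (hB : ∀ i, B.1 i ∈ U.space i.succ) : A = B := by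
  refine Subtype.ext (funext fun i => ?_)
  by_contra hne
  obtain ⟨k, hk⟩ := exists_isLeadingIndex (sub_ne_zero.2 hne)
  have hki : (k : ℕ) < i.succ :=
    (U.leadingIndices_eq i.succ).subset ⟨_, Submodule.sub_mem _ (hA i) (hB i), hk⟩
  rcases (Nat.lt_succ_iff.1 hki).lt_or_eq with hlt | heq
  · exact hk.2 (by simp [A.2.1 i k hlt, B.2.1 i k hlt])
  · exact hk.2 (by simp [Fin.ext heq, A.2.2, B.2.2])

lemma ofRows_eq_of_mem {U : OppositeFlag K m} {A : UnitriangularMatrix K (Fin m)}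
    (hA : ∀ i, A.1 i ∈ U.space i.succ) : ofRows A = U := by
  refine OppositeFlag.ext (funext fun i => eq_of_le_of_leadingIndices_subset ?_ ?_)
  · rw [ofRows, Submodule.span_le]
    rintro _ ⟨k, hk, rfl⟩
    exact U.monotone (show k.succ ≤ i from Nat.succ_le_of_lt hk) (hA k)
  · rw [U.leadingIndices_eq, (ofRows A).leadingIndices_eq]

variable (K m) in
/-- The big Bruhat cell: every flag opposite to the coordinate flag is spanned by the rows of a
unique unitriangular matrix. -/
def equivUnitriangularMatrix : OppositeFlag K m ≃ UnitriangularMatrix K (Fin m) :=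
  (Equiv.ofBijective ofRows
    ⟨fun _ B hAB => rows_eq_of_mem (row_mem_ofRows _) (hAB ▸ row_mem_ofRows B),
      fun U => U.exists_rows_mem.imp fun _ => ofRows_eq_of_mem⟩).symm

end OppositeFlag

end Unitriangular

section IccOrderIso

lemma coe_orderIso_symm_bot {α β : Type*} [PartialOrder α] [PartialOrder β] [OrderBot β] {a b : α}
    (φ : Set.Icc a b ≃o β) : (φ.symm ⊥ : α) = a :=
  have hab : a ≤ b := (φ.symm ⊥).2.1.trans (φ.symm ⊥).2.2
  le_antisymm (φ.symm_apply_le (x := ⟨a, le_rfl, hab⟩).2 bot_le) (φ.symm ⊥).2.1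

lemma coe_orderIso_symm_top {α β : Type*} [PartialOrder α] [PartialOrder β] [OrderTop β] {a b : α}
    (φ : Set.Icc a b ≃o β) : (φ.symm ⊤ : α) = b :=
  have hab : a ≤ b := (φ.symm ⊤).2.1.trans (φ.symm ⊤).2.2
  le_antisymm (φ.symm ⊤).2.2 (φ.le_symm_apply (x := ⟨b, hab, le_rfl⟩).2 le_top)

variable {K E F : Type*} [Ring K] [AddCommGroup E] [Module K E] [AddCommGroup F] [Module K F]

/-- A linear map `s` which is injective modulo `V` and spans `T` together with `V` identifies the
submodules between `V` and `T` with those of its domain, through `W ↦ W.comap s`. -/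
def iccOrderIsoSubmodule {V T : Submodule K E} {s : F →ₗ[K] E} (hbot : V.comap s = ⊥)
    (hsup : V ⊔ LinearMap.range s = T) : Set.Icc V T ≃o Submodule K F :=
  have sup_map_comap (W : Set.Icc V T) : V ⊔ (W.1.comap s).map s = W.1 := by
    rw [Submodule.map_comap_eq, ← sup_inf_assoc_of_le _ W.2.1, hsup, inf_eq_right.2 W.2.2]
  { toFun W := W.1.comap s
    invFun U := ⟨V ⊔ U.map s, le_sup_left, hsup ▸ sup_le_sup_left LinearMap.map_le_range V⟩
    left_inv W := Subtype.ext (sup_map_comap W)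
    right_inv U := by
      refine le_antisymm (fun x hx => ?_) (Submodule.map_le_iff_le_comap.1 le_sup_right)
      obtain ⟨v, hv, _, ⟨u, hu, rfl⟩, hvx⟩ := Submodule.mem_sup.1 hx
      have hxu : x - u ∈ V.comap s := by
        rwa [Submodule.mem_comap, map_sub, ← hvx, add_sub_cancel_right]
      rw [hbot, Submodule.mem_bot, sub_eq_zero] at hxu
      exact hxu ▸ hu
    map_rel_iff' {W W'} := by
      refine ⟨fun h => ?_, fun h => Submodule.comap_mono h⟩
      rw [← Subtype.coe_le_coe, ← sup_map_comap W, ← sup_map_comap W']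
      exact sup_le_sup_left (Submodule.map_mono h) V }

end IccOrderIso

section ComplementaryFrame

variable {K κ : Type*} [Field K]

/-- The orders of the nonzero elements of a subspace of the ring of power series. -/
def orderSet (W : Submodule K K⟦X⟧) : Set ℕ := {n | ∃ x ∈ W, x.order = n}

lemma order_eq_natCast_iff_isLeadingIndex {x : K⟦X⟧} {n : ℕ} :
    x.order = n ↔ IsLeadingIndex (fun d => coeff d x) n :=
  order_eq_nat.trans and_comm

variable [Fintype κ] [LinearOrder κ]

lemma order_linearCombination {γ : κ → ℕ} {e : κ → K⟦X⟧} (hγ : StrictMono γ)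
    (he : ∀ k, (e k).order = γ k) {a : κ → K} {k : κ} (ha : IsLeadingIndex a k) :
    (Fintype.linearCombination K e a).order = γ k := by
  rw [order_eq_natCast_iff_isLeadingIndex]
  convert ha.linearCombination hγ fun k => order_eq_natCast_iff_isLeadingIndex.1 (he k) using 1
  ext d
  simp [Fintype.linearCombination_apply]

lemma comap_linearCombination_eq_bot {V : Submodule K K⟦X⟧} {γ : κ → ℕ} {e : κ → K⟦X⟧}
    (hγ : StrictMono γ) (he : ∀ k, (e k).order = γ k) (hV : ∀ k, γ k ∉ orderSet V) :
    V.comap (Fintype.linearCombination K e) = ⊥ := by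
  refine (Submodule.eq_bot_iff _).2 fun a ha => ?_
  by_contra ha0
  obtain ⟨k, hk⟩ := exists_isLeadingIndex ha0
  exact hV k ⟨_, ha, order_linearCombination hγ he hk⟩

/-- A family of power series spanning a complement of `V` in `T`, whose orders are the strictly
increasing numbers `γ k` and do not occur as orders of elements of `V`. -/
structure IsComplementaryFrame (V T : Submodule K K⟦X⟧) (γ : κ → ℕ) (e : κ → K⟦X⟧) : Prop where
  strictMono : StrictMono γ
  order_eq : ∀ k, (e k).order = γ k
  notMem_orderSet : ∀ k, γ k ∉ orderSet V
  sup_range : V ⊔ LinearMap.range (Fintype.linearCombination K e) = T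

namespace IsComplementaryFrame

variable {V T W : Submodule K K⟦X⟧} {γ : κ → ℕ} {e : κ → K⟦X⟧}

lemma comap_eq_bot (he : IsComplementaryFrame V T γ e) :
    V.comap (Fintype.linearCombination K e) = ⊥ :=
  comap_linearCombination_eq_bot he.strictMono he.order_eq he.notMem_orderSet

lemma order_add_linearCombination (he : IsComplementaryFrame V T γ e) {v : K⟦X⟧} (hv : v ∈ V)
    {a : κ → K} {k : κ} (ha : IsLeadingIndex a k) :
    (v + Fintype.linearCombination K e a).order = min v.order (γ k) := by
  have hs := order_linearCombination he.strictMono he.order_eq ha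
  rw [order_add_of_order_ne, hs]
  exact fun h => he.notMem_orderSet k ⟨v, hv, h.trans hs⟩

lemma orderSet_eq_union_image (he : IsComplementaryFrame V T γ e) (hVW : V ≤ W) (hWT : W ≤ T) :
    orderSet W =
      orderSet V ∪ γ '' leadingIndices (W.comap (Fintype.linearCombination K e)) := by
  refine Set.Subset.antisymm ?_ (Set.union_subset ?_ ?_)
  · rintro n ⟨x, hxW, hxn⟩
    obtain ⟨v, hv, _, ⟨a, rfl⟩, rfl⟩ := Submodule.mem_sup.1 (he.sup_range.ge (hWT hxW))
    have haW : Fintype.linearCombination K e a ∈ W := (W.add_mem_iff_right (hVW hv)).1 hxW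
    rcases eq_or_ne a 0 with rfl | ha
    · exact Or.inl ⟨v, hv, by simpa using hxn⟩
    obtain ⟨k, hk⟩ := exists_isLeadingIndex ha
    rw [he.order_add_linearCombination hv hk] at hxn
    rcases min_choice v.order (γ k) with hmin | hmin <;> rw [hmin] at hxn
    · exact Or.inl ⟨v, hv, hxn⟩
    · exact Or.inr ⟨k, ⟨a, haW, hk⟩, Nat.cast_injective hxn⟩
  · exact fun n ⟨v, hv, hvn⟩ => ⟨v, hVW hv, hvn⟩
  · rintro _ ⟨k, ⟨a, ha, hk⟩, rfl⟩
    exact ⟨_, ha, order_linearCombination he.strictMono he.order_eq hk⟩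

end IsComplementaryFrame

end ComplementaryFrame

section FrameExistence

lemma sup_range_eq_of_finrank_quotient {K E F : Type*} [Field K] [AddCommGroup E] [Module K E]
    [AddCommGroup F] [Module K F] [Module.Finite K F] {V T : Submodule K E} (hV : V.CoFG)
    (hVT : V ≤ T) {s : F →ₗ[K] E} (hsT : LinearMap.range s ≤ T) (hbot : V.comap s = ⊥)
    (hdim : Module.finrank K F = Module.finrank K (T ⧸ V.submoduleOf T)) :
    V ⊔ LinearMap.range s = T := by
  have hfin : (V.submoduleOf T).CoFG := by
    rw [Submodule.submoduleOf, ← V.ker_mkQ, ← LinearMap.ker_comp]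
    exact Submodule.CoFG.ker _
  let sQuot : F →ₗ[K] T ⧸ V.submoduleOf T :=
    (V.submoduleOf T).mkQ ∘ₗ s.codRestrict T fun x => hsT ⟨x, rfl⟩
  have hinj : Function.Injective sQuot := by
    rw [← LinearMap.ker_eq_bot, LinearMap.ker_comp, Submodule.ker_mkQ, ← hbot]
    rfl
  have hsurj : Function.Surjective sQuot :=
    (LinearMap.injective_iff_surjective_of_finrank_eq_finrank hdim).1 hinj
  refine le_antisymm (sup_le hVT hsT) fun t ht => ?_
  obtain ⟨x, hx⟩ := hsurj (Submodule.Quotient.mk ⟨t, ht⟩)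
  have htx : t - s x ∈ V := (Submodule.Quotient.eq (V.submoduleOf T)).1 hx.symm
  exact Submodule.mem_sup.2 ⟨_, htx, _, ⟨x, rfl⟩, sub_add_cancel t (s x)⟩

lemma mem_zO_iff {f : 𝒪} {j : ℕ} : f ∈ zO j ↔ (j : ℕ∞) ≤ f.order := by
  rw [order_eq_emultiplicity_X, ← pow_dvd_iff_le_emultiplicity, dvd_def]
  simp only [zO, LinearMap.mem_range, LinearMap.mulLeft_apply, eq_comm]

lemma zO_cofg (j : ℕ) : (zO j).CoFG := by
  have hker : zO j = LinearMap.ker (LinearMap.pi fun i : Fin j => coeff (R := ℂ) i) := by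
    ext f
    rw [mem_zO_iff, order_eq_emultiplicity_X, ← pow_dvd_iff_le_emultiplicity, X_pow_dvd_iff]
    simp [LinearMap.ker_pi, Fin.forall_iff]
  exact hker ▸ Submodule.CoFG.ker _

lemma not_le_of_quotDim_ne_zero {A B : Submodule ℂ 𝒪} (h : quotDim A B ≠ 0) : ¬ A ≤ B := by
  contrapose! h
  rw [quotDim, Submodule.comap_subtype_eq_top.2 h]
  exact Module.finrank_zero_of_subsingleton

lemma inf_zO_le_sup_of_mem_orderSet {V T : Submodule ℂ 𝒪} (hVT : V ≤ T) {n : ℕ}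
    (hn : n ∈ orderSet V) : T ⊓ zO n ≤ V ⊔ T ⊓ zO (n + 1) := by
  obtain ⟨v, hv, hvn⟩ := hn
  obtain ⟨hlt, hne⟩ := order_eq_natCast_iff_isLeadingIndex.1 hvn
  rintro x ⟨hxT, hxn⟩
  have hlead : ((n + 1 : ℕ) : ℕ∞) ≤ (x - (coeff n x / coeff n v) • v).order := by
    refine nat_le_order _ _ fun i hi => ?_
    rcases (Nat.lt_succ_iff.1 hi).lt_or_eq with hin | rfl
    · have hxi : coeff i x = 0 :=
        coeff_of_lt_order i ((Nat.cast_lt.2 hin).trans_le (mem_zO_iff.1 hxn))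
      simp [hxi, hlt i hin]
    · simp [hne]
  exact Submodule.mem_sup.2 ⟨_, V.smul_mem _ hv, _,
    ⟨T.sub_mem hxT (T.smul_mem _ (hVT hv)), mem_zO_iff.2 hlead⟩, add_sub_cancel _ _⟩

lemma exists_isComplementaryFrame {κ : Type*} [Fintype κ] [LinearOrder κ] {V T : Submodule ℂ 𝒪}
    (hV : V.CoFG) (hVT : V ≤ T) {γ : κ → ℕ} (hγ : StrictMono γ)
    (hjump : ∀ k, ¬ T ⊓ zO (γ k) ≤ V ⊔ T ⊓ zO (γ k + 1)) (hdim : quotDim T V = Fintype.card κ) :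
    ∃ e, IsComplementaryFrame V T γ e := by
  have exists_order_eq : ∀ k, ∃ x ∈ T, x.order = γ k := by
    intro k
    obtain ⟨x, ⟨hxT, hxγ⟩, hx⟩ := SetLike.not_le_iff_exists.1 (hjump k)
    refine ⟨x, hxT, le_antisymm (not_lt.1 fun hlt => hx ?_) (mem_zO_iff.1 hxγ)⟩
    exact le_sup_right (a := V) ⟨hxT, mem_zO_iff.2 (Order.add_one_le_of_lt hlt)⟩
  choose e heT heγ using exists_order_eq
  have hnotMem (k : κ) : γ k ∉ orderSet V :=
    fun hk => hjump k (inf_zO_le_sup_of_mem_orderSet hVT hk)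
  refine ⟨e, hγ, heγ, hnotMem, sup_range_eq_of_finrank_quotient hV hVT ?_
    (comap_linearCombination_eq_bot hγ heγ hnotMem) ?_⟩
  · rw [Fintype.range_linearCombination, Submodule.span_le]
    rintro _ ⟨k, rfl⟩
    exact heT k
  · rw [Module.finrank_fintype_fun_eq_card, ← hdim]
    rfl

end FrameExistence

section FiniteGeneration

lemma fg_of_fg_of_cofg_of_le {K A E : Type*} [CommRing K] [IsNoetherianRing K] [Ring A]
    [Algebra K A] [AddCommGroup E] [Module K E] [Module A E] [IsScalarTower K A E]
    {N M : Submodule A E} (hfg : N.FG) (hcofg : (N.restrictScalars K).CoFG) (hNM : N ≤ M) :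
    M.FG := by
  refine Submodule.fg_of_fg_map_of_fg_inf_ker N.mkQ (.of_restrictScalars K ?_) ?_
  · have : Module.Finite K (E ⧸ N) := hcofg
    exact IsNoetherian.noetherian _
  · rwa [Submodule.ker_mkQ, inf_eq_right.2 hNM]

variable {R : Subalgebra ℂ 𝒪} {c : ℕ} {M : Submodule ↥R 𝒪}

lemma fg_of_zO_le (hc : ∀ f : 𝒪, (X : 𝒪) ^ c * f ∈ R) (hM : zO c ≤ M.restrictScalars ℂ) :
    M.FG := by
  -- The cyclic module `R z ^ c ⊆ M` contains `z ^ (2 * c) 𝒪`, hence has finite codimension.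
  refine fg_of_fg_of_cofg_of_le (K := ℂ) (Submodule.fg_span_singleton (X ^ c : 𝒪))
    ((zO_cofg (c + c)).of_le ?_) ?_
  · rintro _ ⟨f, rfl⟩
    refine Submodule.mem_span_singleton.2 ⟨⟨_, hc f⟩, ?_⟩
    simp only [Subalgebra.smul_def, smul_eq_mul, LinearMap.mulLeft_apply]
    ring
  · rw [Submodule.span_singleton_le_iff_mem]
    exact hM ⟨1, mul_one _⟩

lemma zO_le_of_order_eq_zero (hc : ∀ f : 𝒪, (X : 𝒪) ^ c * f ∈ R) {x : 𝒪} (hx : x ∈ M)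
    (hx0 : x.order = 0) : zO c ≤ M.restrictScalars ℂ := by
  obtain ⟨u, rfl⟩ : IsUnit x := isUnit_iff_constantCoeff.2 <| isUnit_iff_ne_zero.2 fun h =>
    order_ne_zero_iff_constCoeff_eq_zero.2 h hx0
  rintro _ ⟨f, rfl⟩
  have hmem := M.smul_mem ⟨_, hc (f * ↑u⁻¹)⟩ hx
  rwa [Subalgebra.smul_def, smul_eq_mul, mul_assoc, Units.inv_mul_cancel_right] at hmem

end FiniteGeneration

lemma union_image_eq_union_image_iff {α β : Type*} {f : α → β} (hf : Function.Injective f)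
    {D : Set β} (hD : ∀ a, f a ∉ D) {s t : Set α} : D ∪ f '' s = D ∪ f '' t ↔ s = t := by
  refine ⟨fun h => ?_, fun h => h ▸ rfl⟩
  have hpre : f ⁻¹' D = ∅ := Set.eq_empty_of_forall_notMem hD
  simpa only [Set.preimage_union, hpre, Set.empty_union, Set.preimage_image_eq _ hf]
    using congrArg (f ⁻¹' ·) h

section StandardModules

variable {R : Subalgebra ℂ 𝒪} {m : ℕ} {D0 : Set ℕ} {g : ℕ → ℕ} {M0 Mtop W : Submodule ↥R 𝒪}

lemma natCast_ord {f : 𝒪} (hf : f ≠ 0) : (ord f : ℕ∞) = f.order :=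
  have hne : {n | coeff n f ≠ 0}.Nonempty := exists_coeff_ne_zero_iff_ne_zero.2 hf
  (order_eq_nat.2
    ⟨Nat.sInf_mem hne, fun _ hi => not_not.1 (Nat.notMem_of_lt_sInf hi)⟩).symm

lemma ne_zero_and_ord_eq_iff {f : 𝒪} {n : ℕ} : f ≠ 0 ∧ ord f = n ↔ f.order = n := by
  refine ⟨fun ⟨hf, hn⟩ => by rw [← natCast_ord hf, hn], fun hn => ?_⟩
  have hf : f ≠ 0 := by
    rintro rfl
    simp at hn
  exact ⟨hf, Nat.cast_injective ((natCast_ord hf).trans hn)⟩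

lemma DeltaM_eq_orderSet : DeltaM R W = orderSet (W.restrictScalars ℂ) := by
  ext n
  simp only [DeltaM, orderSet, ne_zero_and_ord_eq_iff, Submodule.restrictScalars_mem]

lemma exists_order_eq_zero {V T : Submodule ℂ 𝒪} (hVT : V ≤ T) (hV : ¬ V ≤ T ⊓ zO 1) :
    ∃ x ∈ V, x.order = 0 := by
  obtain ⟨x, hxV, hx⟩ := SetLike.not_le_iff_exists.1 hV
  refine ⟨x, hxV, ?_⟩
  by_contra h0
  exact hx ⟨hVT hxV, mem_zO_iff.2 (by simpa using Order.one_le_iff_ne_zero.2 h0)⟩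

lemma isStd_of_order_eq_zero {c : ℕ} (hc : ∀ f : 𝒪, (X : 𝒪) ^ c * f ∈ R) {x : 𝒪} (hx : x ∈ W)
    (hx0 : x.order = 0) : IsStd R W :=
  ⟨fg_of_zO_le hc (zO_le_of_order_eq_zero hc hx hx0), x, hx, ne_zero_and_ord_eq_iff.2 hx0⟩

lemma mul_mem_of_mSmul_le {U : Submodule ℂ 𝒪} (hU : mSmul R Mtop ≤ U)
    (hUM : U ≤ Mtop.restrictScalars ℂ) {r x : 𝒪} (hr : r ∈ R) (hx : x ∈ U) : r * x ∈ U := by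
  -- Split `r` into its constant coefficient and an element of the maximal ideal.
  let a := constantCoeff r
  let r' := r - algebraMap ℂ 𝒪 a
  have hr' : r' ∈ R := R.sub_mem hr (R.algebraMap_mem a)
  have hpos : r' = 0 ∨ 0 < ord r' := by
    refine or_iff_not_imp_left.2 fun h0 => Nat.pos_of_ne_zero fun hord => ?_
    have horder : r'.order = (0 : ℕ) := ne_zero_and_ord_eq_iff.1 ⟨h0, hord⟩
    exact order_ne_zero_iff_constCoeff_eq_zero.2 (by simp [r', a]) horder
  have hsplit : r * x = r' * x + a • x := by simp [r', sub_mul, Algebra.smul_def]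
  rw [hsplit]
  exact U.add_mem (hU (Submodule.subset_span ⟨r', hr', x, hUM hx, hpos, rfl⟩)) (U.smul_mem a hx)

/-- Every `ℂ`-subspace between `M0 ⊇ 𝔪 Mtop` and `Mtop` is an `R`-submodule. -/
def iccRestrictScalarsOrderIso (h : mSmul R Mtop ≤ M0.restrictScalars ℂ) :
    Set.Icc M0 Mtop ≃o Set.Icc (M0.restrictScalars ℂ) (Mtop.restrictScalars ℂ) where
  toFun W := ⟨W.1.restrictScalars ℂ, W.2⟩
  invFun U :=
    ⟨{ U.1 with smul_mem' r _ hx := mul_mem_of_mSmul_le (h.trans U.2.1) U.2.2 r.2 hx }, U.2⟩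
  left_inv _ := rfl
  right_inv _ := rfl
  map_rel_iff' := Iff.rfl

lemma Dset_eq_union_image {κ : Type*} [Fintype κ] [LinearOrder κ] {γ : κ → ℕ} {e : κ → 𝒪}
    (he : IsComplementaryFrame (M0.restrictScalars ℂ) (Mtop.restrictScalars ℂ) γ e)
    (hγ : ∀ k, γ k ∈ Gaps R \ D0) (hD : Dset R Mtop = D0 ∪ Set.range γ) (hM0W : M0 ≤ W)
    (hWM : W ≤ Mtop) :
    Dset R W = D0 ∪
      γ '' leadingIndices ((W.restrictScalars ℂ).comap (Fintype.linearCombination ℂ e)) := by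
  have Dset_eq {W : Submodule ↥R 𝒪} (hM0W : M0 ≤ W) (hWM : W ≤ Mtop) :
      Dset R W = orderSet (M0.restrictScalars ℂ) ∩ Gaps R ∪
        γ '' leadingIndices ((W.restrictScalars ℂ).comap (Fintype.linearCombination ℂ e)) := by
    rw [Dset, DeltaM_eq_orderSet, he.orderSet_eq_union_image hM0W hWM,
      Set.union_inter_distrib_right]
    congr 1
    exact Set.inter_eq_left.2 (Set.image_subset_iff.2 fun k _ => (hγ k).1)
  have hM0D : orderSet (M0.restrictScalars ℂ) ∩ Gaps R = D0 := by
    have htop := (Dset_eq (hM0W.trans hWM) le_rfl).symm.trans hD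
    refine Set.Subset.antisymm (fun n hn => ?_) (fun n hn => ?_)
    · rcases htop.subset (Or.inl hn) with hn0 | ⟨k, rfl⟩
      · exact hn0
      · exact absurd hn.1 (he.notMem_orderSet k)
    · rcases htop.superset (Or.inl hn) with hn0 | ⟨k, -, rfl⟩
      · exact hn0
      · exact absurd hn (hγ k).2
  rw [Dset_eq hM0W hWM, hM0D]

lemma DFlagSet_eq_union_image (D0 : Set ℕ) (g : ℕ → ℕ) {i : ℕ} (hi : i ≤ m) :
    DFlagSet D0 g i = D0 ∪ (fun k : Fin m => g (k + 1)) '' {k | (k : ℕ) < i} := by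
  rw [DFlagSet]
  congr 1
  ext n
  constructor
  · rintro ⟨j, ⟨hj1, hji⟩, rfl⟩
    exact ⟨⟨j - 1, by omega⟩, show j - 1 < i by omega, by simp [Nat.sub_add_cancel hj1]⟩
  · rintro ⟨k, hk, rfl⟩
    exact ⟨k + 1, ⟨Nat.le_add_left 1 k, hk⟩, rfl⟩

lemma IsDFlag.strictMono (h : IsDFlag R m D0 g) : StrictMono fun k : Fin m => g (k + 1) :=
  fun k l hkl => h.2.1 ⟨by omega, by omega⟩ ⟨by omega, by omega⟩ (Nat.succ_lt_succ hkl)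

lemma IsDFlag.mem_gaps_diff (h : IsDFlag R m D0 g) (k : Fin m) : g (k + 1) ∈ Gaps R \ D0 :=
  h.2.2.1 _ (by omega) (by omega)

lemma IsDFlag.Dset_eq_DFlagSet_iff (h : IsDFlag R m D0 g) {e : Fin m → 𝒪}
    (he : IsComplementaryFrame (M0.restrictScalars ℂ) (Mtop.restrictScalars ℂ)
      (fun k : Fin m => g (k + 1)) e)
    (hD : Dset R Mtop = DFlagSet D0 g m) (hM0W : M0 ≤ W) (hWM : W ≤ Mtop) {i : ℕ} (hi : i ≤ m) :
    Dset R W = DFlagSet D0 g i ↔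
      leadingIndices ((W.restrictScalars ℂ).comap (Fintype.linearCombination ℂ e)) =
        {k : Fin m | (k : ℕ) < i} := by
  rw [DFlagSet_eq_union_image D0 g le_rfl] at hD
  simp only [Fin.is_lt, Set.ofPred_true, Set.image_univ] at hD
  rw [Dset_eq_union_image he h.mem_gaps_diff hD hM0W hWM, DFlagSet_eq_union_image D0 g hi,
    union_image_eq_union_image_iff h.strictMono.injective fun k => (h.mem_gaps_diff k).2]

lemma FlagsBetween.monotone (F : FlagsBetween R m D0 g M0 Mtop) : Monotone F.1 :=
  Fin.monotone_iff_le_succ.2 F.2.1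

lemma FlagsBetween.mem_Icc (F : FlagsBetween R m D0 g M0 Mtop) (i : Fin (m + 1)) :
    F.1 i ∈ Set.Icc M0 Mtop :=
  ⟨F.2.2.1.ge.trans (F.monotone i.zero_le), (F.monotone i.le_last).trans F.2.2.2.1.le⟩

/-- An order isomorphism translating the condition on the `i`-th member of a flag of standard
modules into the one on the `i`-th member of an opposite flag identifies these two kinds of
flags. -/
def flagsBetweenEquivOppositeFlag (φ : Set.Icc M0 Mtop ≃o Submodule ℂ (Fin m → ℂ))
    (hφ : ∀ (W : Set.Icc M0 Mtop) (i : Fin (m + 1)),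
      IsStd R W ∧ Dset R W = DFlagSet D0 g i ↔ leadingIndices (φ W) = {k : Fin m | (k : ℕ) < i}) :
    FlagsBetween R m D0 g M0 Mtop ≃ OppositeFlag ℂ m where
  toFun F :=
    { space i := φ ⟨F.1 i, F.mem_Icc i⟩
      monotone _ _ hij := φ.monotone (F.monotone hij)
      leadingIndices_eq i := (hφ ⟨F.1 i, F.mem_Icc i⟩ i).1 (F.2.2.2.2 i) }
  invFun U := ⟨fun i => φ.symm (U.space i),
    fun i => φ.symm.monotone (U.monotone i.castSucc_le_succ),
    by simp only [U.zero_eq_bot, coe_orderIso_symm_bot],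
    by simp only [U.last_eq_top, coe_orderIso_symm_top],
    fun i => (hφ (φ.symm (U.space i)) i).2 (by rw [φ.apply_symm_apply, U.leadingIndices_eq])⟩
  left_inv F := Subtype.ext (funext fun i => by simp)
  right_inv U := OppositeFlag.ext (funext fun i => by simp)

end StandardModules

/-- With `𝓜_top`, `𝓜̄_0` (lifted to `V`) and `𝓜_0` as in the Nakayama setting,
the set of flags of standard modules realizing the `D`-flag with the given ends
`𝓜_0`, `𝓜_m = 𝓜_top` is in bijection with the group of `m×m` upper-triangular
unipotent complex matrices, hence with `ℂ^{m(m−1)/2}`. -/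
theorem statement11 (R : Subalgebra ℂ 𝒪) (c : ℕ) (hR : HasConductor R c)
    (m : ℕ) (D0 : Set ℕ) (g : ℕ → ℕ) (hflag : IsDFlag R m D0 g)
    (Mtop : Submodule ↥R 𝒪) (hstd : IsStd R Mtop)
    (hDm : Dset R Mtop = DFlagSet D0 g m)
    (hdim : ∀ i, 1 ≤ i → i ≤ m →
      quotDim (((Mtop.restrictScalars ℂ) ⊓ zO (g i)) ⊔ mSmul R Mtop)
              (((Mtop.restrictScalars ℂ) ⊓ zO (g i + 1)) ⊔ mSmul R Mtop) = 1)
    (V : Submodule ℂ 𝒪)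
    (hV1 : mSmul R Mtop ≤ V) (hV2 : V ≤ Mtop.restrictScalars ℂ)
    (hVdim : quotDim (Mtop.restrictScalars ℂ) V = m)
    (hVdim2 : ∀ i, 1 ≤ i → i ≤ m →
      quotDim (V ⊔ ((Mtop.restrictScalars ℂ) ⊓ zO (g i)))
              (V ⊔ ((Mtop.restrictScalars ℂ) ⊓ zO (g i + 1))) = 1)
    (hVnot : ¬ V ≤ ((Mtop.restrictScalars ℂ) ⊓ zO 1) ⊔ mSmul R Mtop)
    (M0 : Submodule ↥R 𝒪) (hM0 : (M0 : Set 𝒪) = (V : Set 𝒪)) :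
    Nonempty (FlagsBetween R m D0 g M0 Mtop ≃
      {A : Matrix (Fin m) (Fin m) ℂ // (∀ i j : Fin m, j < i → A i j = 0) ∧
        ∀ i : Fin m, A i i = 1}) ∧
    Nonempty (FlagsBetween R m D0 g M0 Mtop ≃ (Fin (m*(m-1)/2) → ℂ)) := by
  obtain rfl : M0.restrictScalars ℂ = V := SetLike.coe_injective hM0
  obtain ⟨x, hxM0, hx0⟩ := exists_order_eq_zero hV2 fun h => hVnot (h.trans le_sup_left)
  have hcofg : (M0.restrictScalars ℂ).CoFG :=
    (zO_cofg c).of_le (zO_le_of_order_eq_zero hR.2.1 hxM0 hx0)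
  have hjump (k : Fin m) : ¬ Mtop.restrictScalars ℂ ⊓ zO (g (k + 1)) ≤
      M0.restrictScalars ℂ ⊔ Mtop.restrictScalars ℂ ⊓ zO (g (k + 1) + 1) := fun hle =>
    not_le_of_quotDim_ne_zero (ne_of_eq_of_ne (hVdim2 (k + 1) (by omega) (by omega)) one_ne_zero)
      (sup_le le_sup_left hle)
  obtain ⟨e, he⟩ := exists_isComplementaryFrame hcofg hV2 hflag.strictMono hjump
    (hVdim.trans (Fintype.card_fin m).symm)
  let flagsEquiv : FlagsBetween R m D0 g M0 Mtop ≃ OppositeFlag ℂ m :=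
    flagsBetweenEquivOppositeFlag
      ((iccRestrictScalarsOrderIso hV1).trans (iccOrderIsoSubmodule he.comap_eq_bot he.sup_range))
      fun W i => (and_iff_right (isStd_of_order_eq_zero hR.2.1 (W.2.1 hxM0) hx0)).trans
        (hflag.Dset_eq_DFlagSet_iff he hDm W.2.1 W.2.2 i.is_le)
  let matricesEquiv := flagsEquiv.trans (OppositeFlag.equivUnitriangularMatrix ℂ m)
  exact ⟨⟨matricesEquiv⟩, ⟨matricesEquiv.trans <| (unitriangularMatrixEquivPi ℂ (Fin m)).trans <|
    (Fintype.equivFinOfCardEq (card_pairs_lt m)).arrowCongr (Equiv.refl ℂ)⟩⟩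

end
end

section
/- For every odd integer v ≥ 9, the value semigroup {ν(f) : 0 ≠ f ∈ ℛ} of the subalgebra ℛ = ℂ[z^6, z^8+z^v] + z^{v+27}ℂ⟦z⟧ of ℂ⟦z⟧ equals the submonoid of ℕ generated by 6, 8 and v+16. -/
open PowerSeries

noncomputable section

/-!
Put `x = z^(2p)`, `y = z^(2q) + z^v` and `r = v + 2q(p-1)`, where `p = 3`, `q = 4` in the theorem.
The leading terms of `y^p` and `x^q` cancel, and `w = y^p - x^q` has order `r`, so `2p`, `2q` and
`r` are values. Conversely, reducing `y^p` to `x^q + w` writes every polynomial in `x` and `y` as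
a combination of the products `x^a y^b w^c` with `b < p`. Among those of order less than `2r` the
exponent `c` is at most `1`; as `r` is odd and `p`, `q` are coprime, these have distinct orders,
so no cancellation can create a new value below `2r`. From `2r` on, every integer lies in the
semigroup anyway, as the solution of the coin problem for `p` and `q` shows. Adding `z^N ℂ⟦z⟧`
only affects the values from `N` on, and for `p = 3`, `q = 4`, `N = v + 27` these are in the
semigroup already.
-/

section Order

variable {R : Type*}

theorem order_X_pow_mul_of_constantCoeff_ne_zero [Semiring R] (n : ℕ) {u : R⟦X⟧}
    (hu : constantCoeff u ≠ 0) : (X ^ n * u : R⟦X⟧).order = n := by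
  refine order_eq_nat.2 ⟨?_, fun i hi => ?_⟩
  · simpa [coeff_X_pow_mul'] using hu
  · simp [coeff_X_pow_mul', hi]

theorem order_X_pow_add_X_pow [Semiring R] [Nontrivial R] {m v : ℕ} (hmv : m < v) :
    (X ^ m + X ^ v : R⟦X⟧).order = m := by
  rw [order_add_of_order_ne _ _ (by simpa using hmv.ne)]
  simpa using hmv.le

theorem order_X_pow_add_X_pow_pow_sub [CommRing R] {m v p : ℕ} (hmv : m < v)
    (hp : (p : R) ≠ 0) :
    ((X ^ m + X ^ v) ^ p - X ^ (m * p) : R⟦X⟧).order = (v + m * (p - 1) : ℕ) := by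
  obtain ⟨t, rfl⟩ := Nat.exists_eq_add_of_lt hmv
  obtain ⟨k, rfl⟩ : ∃ k, p = k + 1 := Nat.exists_eq_succ_of_ne_zero (by rintro rfl; simp at hp)
  set S : R⟦X⟧ := ∑ i ∈ Finset.range (k + 1), (X ^ (t + 1) + 1) ^ i with hS
  have constantCoeff_S : constantCoeff S = ((k + 1 : ℕ) : R) := by simp [hS]
  have factorization : ((X ^ m + X ^ (m + t + 1)) ^ (k + 1) - X ^ (m * (k + 1)) : R⟦X⟧) =
      X ^ (m + t + 1 + m * (k + 1 - 1)) * S := by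
    have geometric_sum := geom_sum_mul_add (X ^ (t + 1) : R⟦X⟧) (k + 1)
    calc _ = X ^ (m * (k + 1)) * ((X ^ (t + 1) + 1) ^ (k + 1) - 1) := by
          rw [pow_mul, mul_sub, mul_one, ← mul_pow]; ring
      _ = X ^ (m * (k + 1)) * (S * X ^ (t + 1)) := by rw [← geometric_sum, add_sub_cancel_right]
      _ = _ := by rw [Nat.add_sub_cancel]; ring
  rw [factorization, order_X_pow_mul_of_constantCoeff_ne_zero _ (constantCoeff_S ▸ hp)]

theorem exists_mem_order_eq_of_mem_span [Semiring R] [NoZeroDivisors R] {s : Set R⟦X⟧} {N : ℕ∞}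
    (hs : Set.InjOn order (s ∩ {g | g.order < N})) {f : R⟦X⟧} (hf : f ∈ Submodule.span R s)
    (hfN : f.order < N) : ∃ g ∈ s, g.order = f.order := by
  obtain ⟨c, hcs, rfl⟩ := Submodule.mem_span_set.1 hf
  set f := c.sum fun g a => a • g with f_def
  have coeff_f (k : ℕ) : coeff k f = ∑ g ∈ c.support, c g * coeff k g := by
    simp [f_def, Finsupp.sum]
  obtain ⟨n, hn⟩ := ENat.ne_top_iff_exists.1 hfN.ne_top
  obtain ⟨h, h_mem, h_le⟩ : ∃ h ∈ c.support, h.order ≤ f.order := by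
    have coeff_ne : coeff n f ≠ 0 := (order_eq_nat.1 hn.symm).1
    rw [coeff_f] at coeff_ne
    obtain ⟨h, h_mem, h_ne⟩ := Finset.exists_ne_zero_of_sum_ne_zero coeff_ne
    exact ⟨h, h_mem, hn ▸ order_le n (right_ne_zero_of_mul h_ne)⟩
  obtain ⟨g, g_mem, g_min⟩ := c.support.exists_min_image order ⟨h, h_mem⟩
  have g_le : g.order ≤ f.order := (g_min h h_mem).trans h_le
  refine ⟨g, hcs g_mem, g_le.antisymm (not_lt.1 fun g_lt => ?_)⟩
  obtain ⟨m, hm⟩ := ENat.ne_top_iff_exists.1 g_lt.ne_top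
  have others_vanish : ∀ g' ∈ c.support, g' ≠ g → c g' * coeff m g' = 0 := fun g' mem ne => by
    have g_lt_g' : g.order < g'.order := (g_min g' mem).lt_of_ne fun order_eq =>
      ne (hs ⟨hcs mem, order_eq.ge.trans_lt (g_le.trans_lt hfN)⟩ ⟨hcs g_mem, g_le.trans_lt hfN⟩
        order_eq.symm)
    rw [coeff_of_lt_order m (hm ▸ g_lt_g'), mul_zero]
  have coeff_f_eq : coeff m f = c g * coeff m g := by
    rw [coeff_f, Finset.sum_eq_single_of_mem g g_mem others_vanish]
  exact mul_ne_zero (Finsupp.mem_support_iff.1 g_mem) (order_eq_nat.1 hm.symm).1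
    (coeff_f_eq ▸ coeff_of_lt_order m (hm ▸ g_lt))

end Order

section StandardProducts

variable {A : Type*} [CommRing A]

/-- The products `x^a y^b w^c` with `b < p`, where `w = y^p - x^q`. They span the algebra generated
by `x` and `y`, and replace the monomials in `x` and `y` because `w` may have a larger order than
`y^p` and `x^q`. -/
def standardProducts (x y : A) (p q : ℕ) : Set A :=
  {f | ∃ a b c : ℕ, b < p ∧ x ^ a * y ^ b * (y ^ p - x ^ q) ^ c = f}

theorem x_mul_mem_standardProducts {x y f : A} {p q : ℕ} (hf : f ∈ standardProducts x y p q) :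
    x * f ∈ standardProducts x y p q := by
  obtain ⟨a, b, c, hb, rfl⟩ := hf
  exact ⟨a + 1, b, c, hb, by ring⟩

theorem y_mul_mem_span_standardProducts (R : Type*) [CommSemiring R] [Algebra R A]
    {x y f : A} {p q : ℕ} (hf : f ∈ standardProducts x y p q) :
    y * f ∈ Submodule.span R (standardProducts x y p q) := by
  obtain ⟨a, b, c, hb, rfl⟩ := hf
  rcases (Nat.succ_le_of_lt hb).lt_or_eq with hb' | rfl
  · exact Submodule.subset_span ⟨a, b + 1, c, hb', by ring⟩
  · set w := y ^ (b + 1) - x ^ q with hw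
    have reduction : y * (x ^ a * y ^ b * w ^ c) =
        x ^ (a + q) * y ^ 0 * w ^ c + x ^ a * y ^ 0 * w ^ (c + 1) := by
      linear_combination (-x ^ a * w ^ c) * hw
    rw [reduction]
    exact add_mem (Submodule.subset_span ⟨a + q, 0, c, b.succ_pos, rfl⟩)
      (Submodule.subset_span ⟨a, 0, c + 1, b.succ_pos, rfl⟩)

theorem adjoin_pair_le_span_standardProducts (R : Type*) [CommSemiring R] [Algebra R A] (x y : A)
    {p : ℕ} (hp : p ≠ 0) (q : ℕ) :
    Subalgebra.toSubmodule (Algebra.adjoin R {x, y}) ≤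
      Submodule.span R (standardProducts x y p q) := by
  set M := Submodule.span R (standardProducts x y p q)
  have mul_mem_of_generators (s : A) (hs : ∀ f ∈ standardProducts x y p q, s * f ∈ M) :
      M ≤ M.comap (LinearMap.mulLeft R s) := Submodule.span_le.2 hs
  rw [Algebra.adjoin_toSubmodule_le]
  intro f hf
  induction hf using Submonoid.closure_induction_left with
  | one => exact Submodule.subset_span ⟨0, 0, 0, hp.bot_lt, by simp⟩
  | mul_left s hs f _ ih =>
    rcases hs with rfl | rfl
    · exact mul_mem_of_generators _
        (fun _ hf => Submodule.subset_span (x_mul_mem_standardProducts hf)) ih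
    · exact mul_mem_of_generators _ (fun _ => y_mul_mem_span_standardProducts R) ih

end StandardProducts

section NumericalSemigroup

variable {p q r : ℕ}

theorem combination_mem_closure_triple (a b c k l m : ℕ) :
    k * a + l * b + m * c ∈ AddSubmonoid.closure ({a, b, c} : Set ℕ) :=
  add_mem (add_mem (nsmul_mem (AddSubmonoid.subset_closure (by simp)) k)
    (nsmul_mem (AddSubmonoid.subset_closure (by simp)) l))
    (nsmul_mem (AddSubmonoid.subset_closure (by simp)) m)

theorem mem_closure_of_conductor_le (hpq : p.Coprime q) (hr : Odd r) {n : ℕ}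
    (hn : r + 2 * ((p - 1) * (q - 1)) ≤ n + 1) :
    n ∈ AddSubmonoid.closure ({2 * p, 2 * q, r} : Set ℕ) := by
  have even_case (j : ℕ) (hj : (p - 1) * (q - 1) ≤ j) :
      ∃ k l, 2 * j = k * (2 * p) + l * (2 * q) := by
    obtain ⟨k, l, rfl⟩ :=
      Nat.exists_add_mul_eq_of_gcd_dvd_of_mul_pred_le p q j (by simp [hpq.gcd_eq_one]) hj
    exact ⟨k, l, by ring⟩
  obtain ⟨i, rfl⟩ := hr
  obtain ⟨j, rfl | rfl⟩ := n.even_or_odd'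
  · obtain ⟨k, l, hkl⟩ := even_case j (by omega)
    simpa [hkl] using combination_mem_closure_triple (2 * p) (2 * q) (2 * i + 1) k l 0
  · obtain ⟨k, l, hkl⟩ := even_case (j - i) (by omega)
    have n_eq : 2 * j + 1 = k * (2 * p) + l * (2 * q) + 1 * (2 * i + 1) := by omega
    exact n_eq ▸ combination_mem_closure_triple _ _ _ k l 1

theorem coprime_combination_injective (hpq : p.Coprime q) {a b a' b' : ℕ} (hb : b < p)
    (hb' : b' < p) (h : a * p + b * q = a' * p + b' * q) : a = a' ∧ b = b' := by
  have b_modEq : b * q ≡ b' * q [MOD p] := by simpa [Nat.ModEq] using congrArg (· % p) h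
  obtain rfl : b = b' := (b_modEq.cancel_right_of_coprime hpq).eq_of_lt_of_lt hb hb'
  exact ⟨Nat.eq_of_mul_eq_mul_right (by omega) (Nat.add_right_cancel h), rfl⟩

theorem coprime_odd_combination_injective (hpq : p.Coprime q) (hr : Odd r) {a b c a' b' c' : ℕ}
    (hb : b < p) (hb' : b' < p) (hc : c < 2) (hc' : c' < 2)
    (h : a * (2 * p) + b * (2 * q) + c * r = a' * (2 * p) + b' * (2 * q) + c' * r) :
    a = a' ∧ b = b' ∧ c = c' := by
  have drop_even (k l m : ℕ) : k * (2 * p) + l * (2 * q) + m * r ≡ m * r [MOD 2] := by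
    rw [mul_left_comm k, mul_left_comm l, ← mul_add]
    exact Nat.mul_add_mod _ _ _
  have c_modEq : c * r ≡ c' * r [MOD 2] := (drop_even a b c).symm.trans (h ▸ drop_even a' b' c')
  obtain rfl : c = c' :=
    (c_modEq.cancel_right_of_coprime hr.coprime_two_left).eq_of_lt_of_lt hc hc'
  have half : a * p + b * q = a' * p + b' * q := by linarith
  obtain ⟨rfl, rfl⟩ := coprime_combination_injective hpq hb hb' half
  exact ⟨rfl, rfl, rfl⟩

end NumericalSemigroup

section ValueSemigroup

theorem ord_eq_toNat_order (f : 𝒪) : ord f = f.order.toNat := by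
  rcases eq_or_ne f 0 with rfl | hf
  · simp [ord]
  · exact IsLeast.csInf_eq ⟨coeff_order hf, fun k hk => not_lt.1 fun hlt =>
      hk (coeff_of_lt_order_toNat k hlt)⟩

theorem mem_SGamma_iff {S : Subalgebra ℂ 𝒪} {n : ℕ} : n ∈ SGamma S ↔ ∃ f ∈ S, f.order = n := by
  refine exists_congr fun f => and_congr_right fun _ => ?_
  rw [ord_eq_toNat_order]
  constructor
  · rintro ⟨hf, rfl⟩
    exact (coe_toNat_order hf).symm
  · intro hf
    exact ⟨by rintro rfl; simp at hf, by simp [hf]⟩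

/-- The value semigroup `SGamma S` bundled as an additive submonoid of `ℕ`, so that containing the
closure of a set of values can be checked on that set. -/
def valueSemigroup (S : Subalgebra ℂ 𝒪) : AddSubmonoid ℕ where
  carrier := SGamma S
  zero_mem' := mem_SGamma_iff.2 ⟨1, one_mem S, order_one⟩
  add_mem' hm hn := by
    obtain ⟨f, hf, hfm⟩ := mem_SGamma_iff.1 hm
    obtain ⟨g, hg, hgn⟩ := mem_SGamma_iff.1 hn
    exact mem_SGamma_iff.2 ⟨f * g, mul_mem hf hg, by simp [order_mul, hfm, hgn]⟩

variable (a b c N : ℕ)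

theorem adjoin_le_Rring :
    Algebra.adjoin ℂ {(X : 𝒪) ^ a, (X : 𝒪) ^ b + (X : 𝒪) ^ c} ≤ Rring a b c N :=
  fun f hf => ⟨f, hf, 0, by simp⟩

theorem Ici_subset_SGamma_Rring : Set.Ici N ⊆ SGamma (Rring a b c N) := fun n hn =>
  mem_SGamma_iff.2 ⟨X ^ n, ⟨0, zero_mem _, X ^ (n - N), by
    rw [zero_add, ← pow_add, Nat.add_sub_cancel' hn]⟩, order_X_pow n⟩

variable {a b c N}

theorem exists_mem_adjoin_order_eq {f : 𝒪} (hf : f ∈ Rring a b c N) (hfN : f.order < N) :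
    ∃ g ∈ Algebra.adjoin ℂ {(X : 𝒪) ^ a, (X : 𝒪) ^ b + (X : 𝒪) ^ c}, g.order = f.order := by
  obtain ⟨g, hg, h, rfl⟩ := hf
  have tail_order : (N : ℕ∞) ≤ (X ^ N * h).order := by simp [order_mul]
  have g_order : g.order < N := not_le.1 fun hNg =>
    hfN.not_ge ((le_min hNg tail_order).trans (min_order_le_order_add g _))
  have g_lt_tail := g_order.trans_le tail_order
  exact ⟨g, hg, by rw [order_add_of_order_ne _ _ g_lt_tail.ne, inf_of_le_left g_lt_tail.le]⟩

end ValueSemigroup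

section PlaneCurve

variable {p q v : ℕ}

theorem order_standardProduct (hp : p ≠ 0) (hqv : 2 * q < v) (a b c : ℕ) :
    ((X ^ (2 * p)) ^ a * (X ^ (2 * q) + X ^ v) ^ b *
      ((X ^ (2 * q) + X ^ v) ^ p - (X ^ (2 * p)) ^ q) ^ c : 𝒪).order =
      (a * (2 * p) + b * (2 * q) + c * (v + 2 * q * (p - 1)) : ℕ) := by
  have order_w := order_X_pow_add_X_pow_pow_sub (R := ℂ) hqv (Nat.cast_ne_zero.2 hp)
  rw [← pow_mul X (2 * p) q, mul_right_comm 2 p q, order_mul, order_mul,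
    order_pow _ a, order_pow _ b, order_pow _ c, order_X_pow, order_X_pow_add_X_pow hqv, order_w]
  simp only [nsmul_eq_mul]
  norm_cast

theorem injOn_order_standardProducts (hpq : p.Coprime q) (hp : p ≠ 0) (hv : Odd v)
    (hqv : 2 * q < v) :
    Set.InjOn order (standardProducts (X ^ (2 * p)) (X ^ (2 * q) + X ^ v : 𝒪) p q ∩
      {g | g.order < (2 * (v + 2 * q * (p - 1)) : ℕ)}) := by
  have odd_r : Odd (v + 2 * q * (p - 1)) := hv.add_even (by simp [mul_assoc])
  have lt_two {k l c : ℕ} (h : k + l + c * (v + 2 * q * (p - 1)) < 2 * (v + 2 * q * (p - 1))) :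
      c < 2 := lt_of_mul_lt_mul_right ((Nat.le_add_left _ _).trans_lt h) (Nat.zero_le _)
  rintro _ ⟨⟨a, b, c, hb, rfl⟩, h⟩ _ ⟨⟨a', b', c', hb', rfl⟩, h'⟩ order_eq
  simp only [Set.mem_ofPred_eq, order_standardProduct hp hqv, Nat.cast_lt, Nat.cast_inj]
    at h h' order_eq
  obtain ⟨rfl, rfl, rfl⟩ :=
    coprime_odd_combination_injective hpq odd_r hb hb' (lt_two h) (lt_two h') order_eq
  rfl

theorem closure_subset_SGamma_Rring (hp : p ≠ 0) (hqv : 2 * q < v) (N : ℕ) :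
    (AddSubmonoid.closure {2 * p, 2 * q, v + 2 * q * (p - 1)} : Set ℕ) ⊆
      SGamma (Rring (2 * p) (2 * q) v N) := by
  suffices AddSubmonoid.closure {2 * p, 2 * q, v + 2 * q * (p - 1)} ≤
    valueSemigroup (Rring (2 * p) (2 * q) v N) from this
  have x_mem := adjoin_le_Rring (2 * p) (2 * q) v N (Algebra.subset_adjoin (.inl rfl))
  have y_mem := adjoin_le_Rring (2 * p) (2 * q) v N (Algebra.subset_adjoin (.inr rfl))
  have product_order := order_standardProduct hp hqv
  rw [AddSubmonoid.closure_le]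
  rintro _ (rfl | rfl | rfl) <;> refine mem_SGamma_iff.2 ?_
  · exact ⟨_, x_mem, order_X_pow _⟩
  · exact ⟨_, y_mem, order_X_pow_add_X_pow hqv⟩
  · exact ⟨_, sub_mem (pow_mem y_mem p) (pow_mem x_mem q), by simpa using product_order 0 0 1⟩

theorem mem_closure_of_mem_SGamma_Rring (hpq : p.Coprime q) (hp : p ≠ 0) (hv : Odd v)
    (hqv : 2 * q < v) {N n : ℕ} (hn : n ∈ SGamma (Rring (2 * p) (2 * q) v N)) (hnN : n < N) :
    n ∈ AddSubmonoid.closure {2 * p, 2 * q, v + 2 * q * (p - 1)} := by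
  rcases lt_or_ge n (2 * (v + 2 * q * (p - 1))) with hnr | hrn
  · obtain ⟨f, hf, hfn⟩ := mem_SGamma_iff.1 hn
    obtain ⟨g, hg, hgf⟩ := exists_mem_adjoin_order_eq hf (by simpa [hfn] using hnN)
    obtain ⟨_, ⟨a, b, c, -, rfl⟩, h⟩ := exists_mem_order_eq_of_mem_span
      (injOn_order_standardProducts hpq hp hv hqv)
      (adjoin_pair_le_span_standardProducts ℂ _ _ hp q hg) (by rw [hgf, hfn]; exact mod_cast hnr)
    rw [order_standardProduct hp hqv, hgf, hfn, Nat.cast_inj] at h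
    exact h ▸ combination_mem_closure_triple _ _ _ a b c
  · have conductor_le : 2 * ((p - 1) * (q - 1)) ≤ 2 * q * (p - 1) := by
      rw [mul_comm (p - 1), mul_assoc]; gcongr; omega
    exact mem_closure_of_conductor_le hpq (hv.add_even (by simp [mul_assoc])) (by omega)

theorem statement16_general (hpq : p.Coprime q) (hp : p ≠ 0) (hv : Odd v) (hqv : 2 * q < v)
    (N : ℕ) : SGamma (Rring (2 * p) (2 * q) v N) =
      (AddSubmonoid.closure {2 * p, 2 * q, v + 2 * q * (p - 1)} : Set ℕ) ∪ Set.Ici N := by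
  refine Set.Subset.antisymm (fun n hn => ?_) (Set.union_subset
    (closure_subset_SGamma_Rring hp hqv N) (Ici_subset_SGamma_Rring _ _ _ N))
  exact (lt_or_ge n N).imp_left (mem_closure_of_mem_SGamma_Rring hpq hp hv hqv hn)

end PlaneCurve

/-- For odd `v ≥ 9`, the value semigroup of `ℛ = ℂ[z^6, z^8+z^v] + z^{v+27}ℂ⟦z⟧`
is the submonoid of `ℕ` generated by `6`, `8` and `v+16`. -/
theorem statement16 (v : ℕ) (hv : Odd v) (h9 : 9 ≤ v) :
    SGamma (Rring 6 8 v (v+27)) = ↑(AddSubmonoid.closure ({6, 8, v+16} : Set ℕ)) := by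
  rw [statement16_general (p := 3) (q := 4) (by norm_num) (by norm_num) hv (by omega)]
  exact Set.union_eq_left.2 fun _ hn => mem_closure_of_conductor_le (p := 3) (q := 4)
    (by norm_num) (hv.add_even (by decide)) (Nat.succ_le_succ hn)

end
end
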